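/- arXiv:2212.14236 — 2 statements merged into one kernel-verified Lean document; each statement's English description precedes it below -/
import Mathlib

section
/- Let the orbit be the circular arc a(t) = (cos t + z₁, sin t + z₂) in ℝ² for t ∈ [t_min, t_max], where z = (z₁, z₂) ∈ ℝ² and 0 < T = t_max − t_min < 2π. If θ ∈ [(t_max + t_min)/2, (t_max + t_min)/2 + π], then x̂ = (cos θ, sin θ) is an observable direction, i.e. ξ_max − ξ_min ≥ T. -/
open MeasureTheory

noncomputable section

/-!
An orbit of speed at most one makes `h t = t + ⟪x, a t⟫` nondecreasing in every unit direction `x`,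
because by Cauchy–Schwarz the inner product cannot decrease faster than `t` grows. Hence `h` attains
its extrema at the endpoints, and `x` is observable exactly when it has nonnegative inner product
with the chord `a tmax - a tmin`. The chord of a unit circular arc points along the tangent at the
midpoint of the arc, so for `x = (cos θ, sin θ)` this inner product is
`2 sin (θ - (tmax + tmin) / 2) sin ((tmax - tmin) / 2)`.
-/

section Observability

variable {E : Type*} [SeminormedAddCommGroup E] [InnerProductSpace ℝ E]
  {a : ℝ → E} {x : E} {tmin tmax : ℝ}

/-- The function `h` of the direction `x` along the orbit `a`: up to a constant, the time at which
a signal of unit speed emitted from `a t` at time `t` is received far away in direction `-x`. -/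
def arrivalTime (a : ℝ → E) (x : E) (t : ℝ) : ℝ :=
  t + inner ℝ x (a t)

/-- Observability of the direction `x` for the orbit `a` on `[tmin, tmax]`: the arrival times spread
over a length at least that of the emission interval. The vector `x` is not required to be a unit
vector. -/
def IsObservable (a : ℝ → E) (x : E) (tmin tmax : ℝ) : Prop :=
  tmax - tmin ≤
    sSup (arrivalTime a x '' Set.Icc tmin tmax) - sInf (arrivalTime a x '' Set.Icc tmin tmax)

theorem arrivalTime_sub_arrivalTime (a : ℝ → E) (x : E) (s t : ℝ) :
    arrivalTime a x t - arrivalTime a x s = t - s + inner ℝ x (a t - a s) := by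
  rw [arrivalTime, arrivalTime, inner_sub_right]
  ring

theorem monotoneOn_arrivalTime {S : Set ℝ} (ha : LipschitzOnWith 1 a S) (hx : ‖x‖ ≤ 1) :
    MonotoneOn (arrivalTime a x) S := by
  intro s hs t ht hst
  have inner_le : inner ℝ x (a s - a t) ≤ t - s :=
    calc inner ℝ x (a s - a t)
      _ ≤ ‖x‖ * ‖a s - a t‖ := real_inner_le_norm _ _
      _ ≤ 1 * ‖a s - a t‖ := by gcongr
      _ ≤ |s - t| := by simpa [dist_eq_norm] using ha.dist_le_mul s hs t ht
      _ = t - s := by rw [abs_sub_comm, abs_of_nonneg (sub_nonneg.2 hst)]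
  rw [← neg_sub (a t), inner_neg_right] at inner_le
  linarith [arrivalTime_sub_arrivalTime a x s t]

theorem isObservable_iff_inner_nonneg (ha : LipschitzOnWith 1 a (Set.Icc tmin tmax))
    (hx : ‖x‖ ≤ 1) (htt : tmin ≤ tmax) :
    IsObservable a x tmin tmax ↔ 0 ≤ inner ℝ x (a tmax - a tmin) := by
  have monotone_h := monotoneOn_arrivalTime ha hx
  rw [IsObservable, monotone_h.sSup_image_Icc htt, monotone_h.sInf_image_Icc htt,
    arrivalTime_sub_arrivalTime, le_add_iff_nonneg_right]

end Observability

section CircularOrbit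

/-- The point at angle `θ` on the unit circle of the Euclidean plane. -/
def circlePoint (θ : ℝ) : EuclideanSpace ℝ (Fin 2) :=
  !₂[Real.cos θ, Real.sin θ]

/-- The orbit running around the unit circle centred at `z` with unit angular speed. -/
def circularOrbit (z : EuclideanSpace ℝ (Fin 2)) (t : ℝ) : EuclideanSpace ℝ (Fin 2) :=
  circlePoint t + z

theorem inner_circlePoint (θ t : ℝ) :
    inner ℝ (circlePoint θ) (circlePoint t) = Real.cos (θ - t) := by
  simp [circlePoint, PiLp.inner_apply, Fin.sum_univ_two, Real.cos_sub, mul_comm]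

theorem norm_circlePoint (θ : ℝ) : ‖circlePoint θ‖ = 1 := by
  rw [norm_eq_sqrt_real_inner, inner_circlePoint, sub_self, Real.cos_zero, Real.sqrt_one]

theorem inner_circlePoint_sub (θ s t : ℝ) :
    inner ℝ (circlePoint θ) (circlePoint t - circlePoint s) =
      2 * (Real.sin (θ - (t + s) / 2) * Real.sin ((t - s) / 2)) := by
  have half_sum : (θ - t + (θ - s)) / 2 = θ - (t + s) / 2 := by ring
  have half_diff : (θ - t - (θ - s)) / 2 = -((t - s) / 2) := by ring
  rw [inner_sub_right, inner_circlePoint, inner_circlePoint, Real.cos_sub_cos, half_sum, half_diff,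
    Real.sin_neg]
  ring

theorem lipschitzWith_circlePoint : LipschitzWith 1 circlePoint := by
  refine LipschitzWith.of_dist_le_mul fun s t => ?_
  rw [NNReal.coe_one, one_mul, dist_eq_norm, Real.dist_eq]
  refine le_of_sq_le_sq ?_ (abs_nonneg _)
  calc ‖circlePoint s - circlePoint t‖ ^ 2
    _ = 2 * (1 - Real.cos (s - t)) := by
      rw [norm_sub_sq_real, norm_circlePoint, norm_circlePoint, inner_circlePoint]
      ring
    _ ≤ |s - t| ^ 2 := by
      rw [sq_abs]
      linarith [Real.one_sub_sq_div_two_le_cos (x := s - t)]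

theorem lipschitzWith_circularOrbit (z : EuclideanSpace ℝ (Fin 2)) :
    LipschitzWith 1 (circularOrbit z) :=
  LipschitzWith.of_dist_le_mul fun s t => by
    simpa only [circularOrbit, dist_add_right] using lipschitzWith_circlePoint.dist_le_mul s t

end CircularOrbit

theorem arc_observable_general {tmin tmax : ℝ} (htt : tmin ≤ tmax)
    (z : EuclideanSpace ℝ (Fin 2)) (θ : ℝ) :
    IsObservable (circularOrbit z) (circlePoint θ) tmin tmax ↔
      0 ≤ Real.sin (θ - (tmax + tmin) / 2) * Real.sin ((tmax - tmin) / 2) := by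
  rw [isObservable_iff_inner_nonneg (lipschitzWith_circularOrbit z).lipschitzOnWith
    (norm_circlePoint θ).le htt, circularOrbit, circularOrbit, add_sub_add_right_eq_sub,
    inner_circlePoint_sub, mul_nonneg_iff_of_pos_left two_pos]

/-- For the circular-arc orbit `a(t) = (cos t + z₁, sin t + z₂)` in `ℝ²`
with `0 < T = t_max − t_min < 2π`: if `θ ∈ [(t_max+t_min)/2, (t_max+t_min)/2 + π]`, then
`x̂ = (cos θ, sin θ)` is an observable direction, i.e. `ξ_max − ξ_min ≥ T`. -/
theorem arc_observable
    (tmin tmax T : ℝ) (htmin : 0 < tmin) (htt : tmin < tmax)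
    (hT : T = tmax - tmin) (hT2π : T < 2 * Real.pi)
    (z₁ z₂ θ : ℝ)
    (hθ : θ ∈ Set.Icc ((tmax + tmin) / 2) ((tmax + tmin) / 2 + Real.pi))
    (a : ℝ → EuclideanSpace ℝ (Fin 2))
    (ha : ∀ t, a t = (WithLp.equiv 2 (Fin 2 → ℝ)).symm
      ![Real.cos t + z₁, Real.sin t + z₂])
    (xhat : EuclideanSpace ℝ (Fin 2))
    (hx : xhat = (WithLp.equiv 2 (Fin 2 → ℝ)).symm ![Real.cos θ, Real.sin θ])
    (h : ℝ → ℝ) (hh : ∀ t, h t = t + inner ℝ xhat (a t)) :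
    sSup (h '' Set.Icc tmin tmax) - sInf (h '' Set.Icc tmin tmax) ≥ T := by
  have h_eq : h = arrivalTime (circularOrbit !₂[z₁, z₂]) (circlePoint θ) := by
    ext t
    rw [hh, ha, hx, arrivalTime, circularOrbit, circlePoint, circlePoint]
    simp [PiLp.inner_apply]
  have sin_offset_nonneg : 0 ≤ Real.sin (θ - (tmax + tmin) / 2) :=
    Real.sin_nonneg_of_nonneg_of_le_pi (by linarith [hθ.1]) (by linarith [hθ.2])
  have sin_half_nonneg : 0 ≤ Real.sin ((tmax - tmin) / 2) :=
    Real.sin_nonneg_of_nonneg_of_le_pi (by linarith) (by linarith)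
  rw [h_eq, hT]
  exact (arc_observable_general htt.le _ θ).2 (mul_nonneg sin_offset_nonneg sin_half_nonneg)
end
end

section
/- If x̂ is a non-observable direction, i.e. ξ_max − ξ_min < T, then for every y ∈ ℝ^d the test function φ_y^{(x̂)} does not belong to the range of the data-to-pattern operator L^{(x̂)} : L²(t_min, t_max) → L²(0, K). -/
open MeasureTheory

noncomputable section

/-!
If `φ_y = L ψ` on `(0, K)`, then, both sides being restrictions of entire functions of the
frequency, the identity persists at all complex frequencies. At an imaginary frequency `i s` the
left-hand side is a multiple of the moment-generating function of `t ↦ x̂ · y + t`, whose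
exponential growth as `s → ±∞` detects the endpoints of the interval
`[x̂ · y + t_min, x̂ · y + t_max]` by the Chernoff bound, while the right-hand side grows no faster
than `exp (s ξ_max)`, respectively `exp (s ξ_min)`. Hence this interval of length `T` is contained
in `[ξ_min, ξ_max]`.
-/

section Entire

open Filter Set Topology

theorem eq_of_differentiable_of_ae_eq_on_line {E : Type*} [NormedAddCommGroup E]
    [NormedSpace ℂ E] [CompleteSpace E] {f g : ℂ → E}
    (hf : Differentiable ℂ f) (hg : Differentiable ℂ g) {w : ℂ} (hw : w ≠ 0)
    {U : Set ℝ} (hU : IsOpen U) (hU_nonempty : U.Nonempty)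
    (hfg : (fun x : ℝ => f (w * x)) =ᵐ[volume.restrict U] fun x : ℝ => g (w * x)) :
    f = g := by
  have line_continuous : Continuous fun x : ℝ => w * x := by fun_prop
  have hEqOn : EqOn (fun x : ℝ => f (w * x)) (fun x : ℝ => g (w * x)) U :=
    Measure.eqOn_open_of_ae_eq hfg hU (hf.continuous.comp line_continuous).continuousOn
      (hg.continuous.comp line_continuous).continuousOn
  obtain ⟨x₀, hx₀⟩ := hU_nonempty
  have line_tendsto : Tendsto (fun x : ℝ => w * x) (𝓝[≠] x₀) (𝓝[≠] (w * x₀)) :=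
    line_continuous.continuousWithinAt.tendsto_nhdsWithin fun x hx => by simpa [hw] using hx
  have agree_near : ∀ᶠ x : ℝ in 𝓝[≠] x₀, f (w * x) = g (w * x) :=
    nhdsWithin_le_nhds (eventually_of_mem (hU.mem_nhds hx₀) hEqOn)
  exact AnalyticOnNhd.eq_of_frequently_eq (fun z _ => hf.analyticAt z)
    (fun z _ => hg.analyticAt z) (line_tendsto.frequently agree_near.frequently)

end Entire

section WeightedMGF

open Filter ProbabilityTheory Set Topology

variable {Ω E : Type*} {mΩ : MeasurableSpace Ω} [NormedAddCommGroup E] [NormedSpace ℂ E]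
  {μ : Measure Ω} {X : Ω → ℝ} {ψ : Ω → E}

/-- The moment-generating function of `X` under the vector measure with density `ψ` with respect
to `μ`. It extends `ProbabilityTheory.complexMGF`, the case `ψ = 1`, and `L ψ` in the paper is the
function `τ ↦ weightedMGF h ψ volume (-i τ)`. -/
def weightedMGF (X : Ω → ℝ) (ψ : Ω → E) (μ : Measure Ω) (z : ℂ) : E :=
  ∫ ω, Complex.exp (z * X ω) • ψ ω ∂μ

theorem weightedMGF_const_smul (c z : ℂ) :
    weightedMGF X (c • ψ) μ z = c • weightedMGF X ψ μ z := by
  simp only [weightedMGF, Pi.smul_apply, smul_comm _ c, integral_smul]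

theorem norm_cexp_mul_ofReal_le {x M : ℝ} (hx : |x| ≤ M) (z : ℂ) :
    ‖Complex.exp (z * x)‖ ≤ Real.exp (‖z‖ * M) := by
  refine (Complex.norm_exp_le_exp_norm _).trans (Real.exp_le_exp.2 ?_)
  rw [norm_mul, Complex.norm_real, Real.norm_eq_abs]
  gcongr

theorem differentiable_weightedMGF {M : ℝ} (hX : AEMeasurable X μ) (hXM : ∀ᵐ ω ∂μ, |X ω| ≤ M)
    (hψ : Integrable ψ μ) : Differentiable ℂ (weightedMGF X ψ μ) := by
  intro z₀
  have hX_meas : AEStronglyMeasurable (fun ω => (X ω : ℂ)) μ :=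
    hX.complex_ofReal.aestronglyMeasurable
  have exp_meas (z : ℂ) : AEStronglyMeasurable (fun ω => Complex.exp (z * X ω)) μ :=
    Complex.continuous_exp.comp_aestronglyMeasurable (hX_meas.const_mul z)
  have deriv_bound : ∀ᵐ ω ∂μ, ∀ z ∈ Metric.ball z₀ 1,
      ‖(Complex.exp (z * X ω) * X ω) • ψ ω‖ ≤ Real.exp ((‖z₀‖ + 1) * M) * M * ‖ψ ω‖ := by
    filter_upwards [hXM] with ω hω z hz
    have hM : 0 ≤ M := (abs_nonneg _).trans hω
    have hz_norm : ‖z‖ ≤ ‖z₀‖ + 1 := by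
      linarith [norm_sub_norm_le z z₀, mem_ball_iff_norm.1 hz]
    rw [norm_smul, norm_mul, Complex.norm_real, Real.norm_eq_abs]
    gcongr
    exact (norm_cexp_mul_ofReal_le hω z).trans (by gcongr)
  have hasDerivAt_integrand (ω : Ω) (z : ℂ) : HasDerivAt
      (fun z => Complex.exp (z * X ω) • ψ ω) ((Complex.exp (z * X ω) * X ω) • ψ ω) z :=
    (hasDerivAt_mul_const (X ω : ℂ)).cexp.smul_const (ψ ω)
  exact (hasDerivAt_integral_of_dominated_loc_of_deriv_le (Metric.ball_mem_nhds z₀ one_pos)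
    (.of_forall fun z => (exp_meas z).smul hψ.1)
    (hψ.bdd_smul _ (exp_meas z₀) (hXM.mono fun ω hω => norm_cexp_mul_ofReal_le hω z₀))
    (((exp_meas z₀).mul hX_meas).smul hψ.1) deriv_bound (hψ.norm.const_mul _)
    (.of_forall fun ω z _ => hasDerivAt_integrand ω z)).2.differentiableAt

theorem norm_weightedMGF_ofReal_le {s m : ℝ} (hψ : Integrable ψ μ)
    (hm : ∀ᵐ ω ∂μ, s * X ω ≤ m) :
    ‖weightedMGF X ψ μ s‖ ≤ (∫ ω, ‖ψ ω‖ ∂μ) * Real.exp m := by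
  rw [← integral_mul_const]
  refine norm_integral_le_of_norm_le (hψ.norm.mul_const _) ?_
  filter_upwards [hm] with ω hω
  rw [norm_smul, ← Complex.ofReal_mul, Complex.norm_exp_ofReal, mul_comm]
  gcongr

theorem differentiable_complexMGF_of_mem_Icc [IsFiniteMeasure μ] {a b : ℝ}
    (hX : AEMeasurable X μ) (hab : ∀ᵐ ω ∂μ, X ω ∈ Icc a b) :
    Differentiable ℂ (complexMGF X μ) := by
  have integrableExpSet_eq_univ : integrableExpSet X μ = univ :=
    eq_univ_of_forall fun _ => integrable_exp_mul_of_mem_Icc hX hab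
  intro z
  exact (hasDerivAt_complexMGF (by simp [integrableExpSet_eq_univ])).differentiableAt

theorem ae_le_of_mgf_le_const_mul_exp [IsFiniteMeasure μ] {b C : ℝ}
    (hX : ∀ s, 0 ≤ s → Integrable (fun ω => Real.exp (s * X ω)) μ)
    (hmgf : ∀ s, 0 ≤ s → mgf X μ s ≤ C * Real.exp (s * b)) : ∀ᵐ ω ∂μ, X ω ≤ b := by
  refine (ae_le_const_iff_forall_gt_measure_zero X b).2 fun m hbm => ?_
  have chernoff (s : ℝ) (hs : 0 ≤ s) :
      μ.real {ω | m ≤ X ω} ≤ C * Real.exp (-((m - b) * s)) :=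
    calc μ.real {ω | m ≤ X ω}
      _ ≤ Real.exp (-s * m) * mgf X μ s := measure_ge_le_exp_mul_mgf m hs (hX s hs)
      _ ≤ Real.exp (-s * m) * (C * Real.exp (s * b)) := by gcongr; exact hmgf s hs
      _ = C * Real.exp (-((m - b) * s)) := by
        rw [mul_left_comm, ← Real.exp_add]
        ring_nf
  have bound_tendsto :
      Tendsto (fun s => C * Real.exp (-((m - b) * s))) atTop (𝓝 0) := by
    simpa using (Real.tendsto_exp_neg_atTop_nhds_zero.comp
      (tendsto_id.const_mul_atTop (sub_pos.2 hbm))).const_mul C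
  have tail_nonpos : μ.real {ω | m ≤ X ω} ≤ 0 :=
    ge_of_tendsto bound_tendsto (eventually_atTop.2 ⟨0, chernoff⟩)
  exact (measureReal_eq_zero_iff).1 (tail_nonpos.antisymm measureReal_nonneg)

theorem ae_mem_Icc_of_mgf_le_const_mul_exp [IsFiniteMeasure μ] {a b C : ℝ}
    (hX : ∀ s, Integrable (fun ω => Real.exp (s * X ω)) μ)
    (hmgf_upper : ∀ s, 0 ≤ s → mgf X μ s ≤ C * Real.exp (s * b))
    (hmgf_lower : ∀ s, s ≤ 0 → mgf X μ s ≤ C * Real.exp (s * a)) :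
    ∀ᵐ ω ∂μ, X ω ∈ Icc a b := by
  have upper : ∀ᵐ ω ∂μ, X ω ≤ b := ae_le_of_mgf_le_const_mul_exp (fun s _ => hX s) hmgf_upper
  have lower : ∀ᵐ ω ∂μ, (-X) ω ≤ -a := by
    refine ae_le_of_mgf_le_const_mul_exp (C := C) (fun s _ => ?_) fun s hs => ?_
    · simpa using hX (-s)
    · simpa [mgf_neg] using hmgf_lower (-s) (neg_nonpos.2 hs)
  filter_upwards [lower, upper] with ω hlower hupper
  exact ⟨neg_le_neg_iff.1 hlower, hupper⟩

/- The density `ψ` may cancel, but `ν` is positive, so the growth of its moment-generating function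
detects the extreme values of `Y`. -/
theorem ae_mem_Icc_of_complexMGF_ae_eq_weightedMGF {Ω' : Type*} {mΩ' : MeasurableSpace Ω'}
    {ν : Measure Ω'} [IsFiniteMeasure ν] {Y : Ω' → ℝ} {ψ : Ω → ℂ} {a b p q : ℝ}
    (hX : AEMeasurable X μ) (hXab : ∀ᵐ ω ∂μ, X ω ∈ Icc a b) (hψ : Integrable ψ μ)
    (hY : AEMeasurable Y ν) (hYpq : ∀ᵐ ω ∂ν, Y ω ∈ Icc p q)
    {w : ℂ} (hw : w ≠ 0) {U : Set ℝ} (hU : IsOpen U) (hU_nonempty : U.Nonempty)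
    (hYX : (fun τ : ℝ => complexMGF Y ν (w * τ)) =ᵐ[volume.restrict U]
      fun τ : ℝ => weightedMGF X ψ μ (w * τ)) :
    ∀ᵐ ω ∂ν, Y ω ∈ Icc a b := by
  have hX_bdd : ∀ᵐ ω ∂μ, |X ω| ≤ max |a| |b| :=
    hXab.mono fun ω hω => abs_le_max_abs_abs hω.1 hω.2
  have hEq : complexMGF Y ν = weightedMGF X ψ μ :=
    eq_of_differentiable_of_ae_eq_on_line (differentiable_complexMGF_of_mem_Icc hY hYpq)
      (differentiable_weightedMGF hX hX_bdd hψ) hw hU hU_nonempty hYX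
  have mgf_le (s m : ℝ) (hm : ∀ᵐ ω ∂μ, s * X ω ≤ m) :
      mgf Y ν s ≤ (∫ ω, ‖ψ ω‖ ∂μ) * Real.exp m := by
    calc mgf Y ν s
      _ = (weightedMGF X ψ μ s).re := by rw [← hEq, re_complexMGF_ofReal]
      _ ≤ ‖weightedMGF X ψ μ s‖ := Complex.re_le_norm _
      _ ≤ (∫ ω, ‖ψ ω‖ ∂μ) * Real.exp m := norm_weightedMGF_ofReal_le hψ hm
  exact ae_mem_Icc_of_mgf_le_const_mul_exp (fun _ => integrable_exp_mul_of_mem_Icc hY hYpq)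
    (fun s hs => mgf_le s _ (hXab.mono fun ω hω => mul_le_mul_of_nonneg_left hω.2 hs))
    (fun s hs => mgf_le s _ (hXab.mono fun ω hω => mul_le_mul_of_nonpos_left hω.1 hs))

end WeightedMGF

theorem sub_le_sub_of_ae_const_add_mem_Icc {a b c p q : ℝ} (hab : a < b)
    (h : ∀ᵐ t ∂volume.restrict (Set.Ioo a b), c + t ∈ Set.Icc p q) : b - a ≤ q - p := by
  have volume_le : volume (Set.Ioo a b) ≤ volume ((c + ·) ⁻¹' Set.Icc p q) :=
    measure_mono_ae ((ae_restrict_iff' measurableSet_Ioo).1 h)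
  rw [measure_preimage_add, Real.volume_Ioo, Real.volume_Icc, ENNReal.ofReal_le_ofReal_iff']
    at volume_le
  exact volume_le.resolve_right (sub_pos.2 hab).not_ge

theorem sub_le_sub_of_weightedMGF_ae_eq_const_mul_complexMGF {Ω : Type*} {mΩ : MeasurableSpace Ω}
    {μ : Measure Ω} {X : Ω → ℝ} {ψ : Ω → ℂ} {a b c p q : ℝ} (hab : a < b)
    (hX : AEMeasurable X μ) (hXpq : ∀ᵐ ω ∂μ, X ω ∈ Set.Icc p q) (hψ : Integrable ψ μ)
    {κ w : ℂ} (hκ : κ ≠ 0) (hw : w ≠ 0) {U : Set ℝ} (hU : IsOpen U) (hU_nonempty : U.Nonempty)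
    (hEq : (fun τ : ℝ => weightedMGF X ψ μ (w * τ)) =ᵐ[volume.restrict U] fun τ : ℝ =>
      κ * ProbabilityTheory.complexMGF (c + ·) (volume.restrict (Set.Ioo a b)) (w * τ)) :
    b - a ≤ q - p := by
  have shift_mem_Icc : ∀ᵐ t ∂volume.restrict (Set.Ioo a b), c + t ∈ Set.Icc (c + a) (c + b) := by
    filter_upwards [ae_restrict_mem measurableSet_Ioo] with t ht
    constructor <;> linarith [ht.1, ht.2]
  refine sub_le_sub_of_ae_const_add_mem_Icc hab (c := c) ?_
  refine ae_mem_Icc_of_complexMGF_ae_eq_weightedMGF hX hXpq (hψ.smul κ⁻¹) (by fun_prop)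
    shift_mem_Icc hw hU hU_nonempty ?_
  filter_upwards [hEq] with τ hτ
  rw [weightedMGF_const_smul, hτ, smul_eq_mul, inv_mul_cancel_left₀ hκ]

theorem testFunction_not_in_range_of_nonobservable_general
    {E : Type*} [NormedAddCommGroup E] [InnerProductSpace ℝ E]
    {tmin tmax T : ℝ} (htt : tmin < tmax) (hT : T = tmax - tmin)
    {K : ℝ} (hK : 0 < K)
    {a : ℝ → E} (ha : ContinuousOn a (Set.Icc tmin tmax)) {xhat : E}
    {h : ℝ → ℝ} (hh : ∀ t, h t = t + inner ℝ xhat (a t))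
    {ξmin ξmax : ℝ}
    (hξmin : ξmin = sInf (h '' Set.Icc tmin tmax))
    (hξmax : ξmax = sSup (h '' Set.Icc tmin tmax))
    (hnonobs : ξmax - ξmin < T)
    {p q : ENNReal} (hp : 1 ≤ p)
    {L : Lp ℂ p (volume.restrict (Set.Ioo tmin tmax)) → Lp ℂ q (volume.restrict (Set.Ioo 0 K))}
    (hL : ∀ ψ : Lp ℂ p (volume.restrict (Set.Ioo tmin tmax)),
      (L ψ : ℝ → ℂ) =ᵐ[volume.restrict (Set.Ioo 0 K)]
        fun τ => ∫ t in Set.Ioo tmin tmax,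
          Complex.exp (-(Complex.I) * τ * (h t)) * ψ t)
    (y : E) :
    ¬ ∃ ψ : Lp ℂ p (volume.restrict (Set.Ioo tmin tmax)),
      (L ψ : ℝ → ℂ) =ᵐ[volume.restrict (Set.Ioo 0 K)]
        fun k => (1 / (T : ℂ)) *
          ∫ t in Set.Ioo tmin tmax,
            Complex.exp (-(Complex.I) * k * ((inner ℝ xhat y : ℝ) + t)) := by
  rintro ⟨ψ, hψ⟩
  have h_cont : ContinuousOn h (Set.Icc tmin tmax) := by
    rw [funext hh]
    fun_prop
  have h_mem_Icc : ∀ᵐ t ∂volume.restrict (Set.Ioo tmin tmax), h t ∈ Set.Icc ξmin ξmax := by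
    filter_upwards [ae_restrict_mem measurableSet_Ioo] with t ht
    rw [hξmin, hξmax, ← h_cont.image_Icc htt.le]
    exact Set.mem_image_of_mem h (Set.Ioo_subset_Icc_self ht)
  have hT_inv : 1 / (T : ℂ) ≠ 0 :=
    one_div_ne_zero (Complex.ofReal_ne_zero.2 (hT ▸ (sub_pos.2 htt).ne'))
  refine hnonobs.not_ge (hT ▸ sub_le_sub_of_weightedMGF_ae_eq_const_mul_complexMGF htt
    ((h_cont.mono Set.Ioo_subset_Icc_self).aemeasurable measurableSet_Ioo) h_mem_Icc
    ((Lp.memLp ψ).integrable hp) hT_inv (neg_ne_zero.2 Complex.I_ne_zero) isOpen_Ioo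
    (Set.nonempty_Ioo.2 hK) (c := inner ℝ xhat y) ?_)
  filter_upwards [hL ψ, hψ] with τ hLτ hφτ
  simpa only [weightedMGF, ProbabilityTheory.complexMGF, smul_eq_mul, Complex.ofReal_add]
    using hLτ.symm.trans hφτ

/-- If `x̂` is a non-observable direction, i.e. `ξ_max − ξ_min < T`, then
for every `y ∈ ℝ^d` the test function `φ_y^{(x̂)}` does not belong to the range of the
data-to-pattern operator `L^{(x̂)} : L²(t_min,t_max) → L²(0,K)`. -/
theorem testFunction_not_in_range_of_nonobservable
    {d : ℕ} (hd : d = 2 ∨ d = 3)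
    (tmin tmax T : ℝ) (htmin : 0 < tmin) (htt : tmin < tmax)
    (hT : T = tmax - tmin)
    (K : ℝ) (hK : 0 < K)
    (a : ℝ → EuclideanSpace ℝ (Fin d))
    (ha : ContDiffOn ℝ 1 a (Set.Icc tmin tmax))
    (xhat : EuclideanSpace ℝ (Fin d)) (hxhat : ‖xhat‖ = 1)
    (h : ℝ → ℝ) (hh : ∀ t, h t = t + inner ℝ xhat (a t))
    (ξmin ξmax : ℝ)
    (hξmin : ξmin = sInf (h '' Set.Icc tmin tmax))
    (hξmax : ξmax = sSup (h '' Set.Icc tmin tmax))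
    (hnonobs : ξmax - ξmin < T)
    (L : Lp ℂ 2 (volume.restrict (Set.Ioo tmin tmax)) →L[ℂ]
         Lp ℂ 2 (volume.restrict (Set.Ioo 0 K)))
    (hL : ∀ ψ : Lp ℂ 2 (volume.restrict (Set.Ioo tmin tmax)),
      (L ψ : ℝ → ℂ) =ᵐ[volume.restrict (Set.Ioo 0 K)]
        fun τ => ∫ t in Set.Ioo tmin tmax,
          Complex.exp (-(Complex.I) * τ * (h t)) * ψ t) :
    ∀ y : EuclideanSpace ℝ (Fin d),
      ¬ ∃ ψ : Lp ℂ 2 (volume.restrict (Set.Ioo tmin tmax)),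
        (L ψ : ℝ → ℂ) =ᵐ[volume.restrict (Set.Ioo 0 K)]
          fun k => (1 / (T : ℂ)) *
            ∫ t in Set.Ioo tmin tmax,
              Complex.exp (-(Complex.I) * k * ((inner ℝ xhat y : ℝ) + t)) := by
  exact testFunction_not_in_range_of_nonobservable_general htt hT hK ha.continuousOn hh hξmin hξmax
    hnonobs one_le_two hL
end
end
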